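/- Sharp affine L_p log-Sobolev inequality: for n ≥ 1, p > 1, and any smooth compactly supported f on ℝⁿ with ∫ |f|^p dx = 1, one has ∫ |f|^p log |f|^p dx ≤ (n/p) log(𝓛_{n,p} 𝓔_p(f)^p), where 𝓔_p(f) = c_{n,p} (∫_{S^{n-1}} ‖∇_ξ f‖_p^{-n} dξ)^{-1/n}, c_{n,p} = (nω_n)^{1/n} (nω_n ω_{p-1}/(2ω_{n+p-2}))^{1/p}, and 𝓛_{n,p} = (p/n)((p-1)/e)^{p-1} π^{-p/2} (Γ(n/2+1)/Γ(n(p-1)/p+1))^{p/n}. This may assume as hypotheses the Euclidean sharp L_p log-Sobolev inequality for arbitrary q-homogeneous even strictly convex cost functions (Gentil's theorem) and the L_p Busemann-Petty centroid inequality. -/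

import Mathlib

open MeasureTheory Real
open scoped RealInnerProductSpace Pointwise

noncomputable section

/-- `ω_s = π^(s/2) / Γ(s/2 + 1)`. -/
def omegaR (s : ℝ) : ℝ := Real.pi ^ (s / 2) / Real.Gamma (s / 2 + 1)

/-- `a₁ = ω_{n+p} / (ω₂ ω_n ω_{p-1})`. -/
def aOne (n : ℕ) (p : ℝ) : ℝ := omegaR (n + p) / (omegaR 2 * omegaR n * omegaR (p - 1))

/-- The `L^p` norm of the directional derivative `∇_ξ f = ⟨∇f, ξ⟩`. -/
def dirDerivLpNorm (n : ℕ) (p : ℝ) (f : EuclideanSpace ℝ (Fin n) → ℝ)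
    (ξ : EuclideanSpace ℝ (Fin n)) : ℝ :=
  (∫ y, |⟪gradient f y, ξ⟫| ^ p) ^ (1 / p)

/-- `C_f*(x) = ∫_{S^{n-1}} ‖∇_ξ f‖_p^{-(n+p)} |⟨x, ξ⟩|^p dξ`. -/
def Cfstar (n : ℕ) (p : ℝ) (f : EuclideanSpace ℝ (Fin n) → ℝ)
    (x : EuclideanSpace ℝ (Fin n)) : ℝ :=
  ∫ ξ : Metric.sphere (0 : EuclideanSpace ℝ (Fin n)) 1,
    dirDerivLpNorm n p f ξ ^ (-(n + p : ℝ)) * |⟪x, (ξ : EuclideanSpace ℝ (Fin n))⟫| ^ p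
      ∂(volume : Measure (EuclideanSpace ℝ (Fin n))).toSphere

/-- The Legendre transform. -/
def legendre {n : ℕ} (C : EuclideanSpace ℝ (Fin n) → ℝ) (x : EuclideanSpace ℝ (Fin n)) : ℝ :=
  ⨆ y : EuclideanSpace ℝ (Fin n), (⟪x, y⟫ - C y)

/-- The `L_p`-centroid body `Γ_p L`, described through its support function
`h_{Γ_p L}(v) = ((1/(a₁ vol(L))) ∫_L |⟨v, x⟩|^p dx)^{1/p}`. -/
def centroidBody (n : ℕ) (p : ℝ) (L : Set (EuclideanSpace ℝ (Fin n))) :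
    Set (EuclideanSpace ℝ (Fin n)) :=
  {x | ∀ v : EuclideanSpace ℝ (Fin n),
    ⟪x, v⟫ ≤ ((aOne n p * (volume L).toReal)⁻¹ * ∫ y in L, |⟪v, y⟫| ^ p) ^ (1 / p)}


/-- `Z_p(f) = (∫_{S^{n-1}} ‖∇_ξ f‖_p^{-n} dξ)^{-1/n}`. -/
def Zp (n : ℕ) (p : ℝ) (f : EuclideanSpace ℝ (Fin n) → ℝ) : ℝ :=
  (∫ ξ : Metric.sphere (0 : EuclideanSpace ℝ (Fin n)) 1,
      dirDerivLpNorm n p f ξ ^ (-(n : ℝ))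
        ∂(volume : Measure (EuclideanSpace ℝ (Fin n))).toSphere) ^ (-(1 / (n : ℝ)))

/-- `c_{n,p} = (n ω_n)^{1/n} (n ω_n ω_{p-1} / (2 ω_{n+p-2}))^{1/p}`. -/
def cnp (n : ℕ) (p : ℝ) : ℝ :=
  ((n : ℝ) * omegaR n) ^ (1 / (n : ℝ)) *
    ((n : ℝ) * omegaR n * omegaR (p - 1) / (2 * omegaR ((n : ℝ) + p - 2))) ^ (1 / p)

/-- The affine energy `𝓔_p(f) = c_{n,p} Z_p(f)`. -/
def affineEnergy (n : ℕ) (p : ℝ) (f : EuclideanSpace ℝ (Fin n) → ℝ) : ℝ :=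
  cnp n p * Zp n p f

/-- The sharp `L_p` log-Sobolev constant
`𝓛_{n,p} = (p/n) ((p-1)/e)^{p-1} π^{-p/2} (Γ(n/2+1)/Γ(n(p-1)/p+1))^{p/n}`. -/
def logSobolevConst (n : ℕ) (p : ℝ) : ℝ :=
  (p / n) * ((p - 1) / Real.exp 1) ^ (p - 1) * Real.pi ^ (-(p / 2)) *
    (Real.Gamma ((n : ℝ) / 2 + 1) / Real.Gamma ((n : ℝ) * (p - 1) / p + 1)) ^ (p / (n : ℝ))

/-!
Let `K` be the unit ball of the norm `ξ ↦ ‖∇_ξ f‖_p`, and let `m v = ∫_K |⟨x, v⟩|^p dx`. Gentil's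
inequality is applied to the cost `C = m*`, the Legendre transform of `m`.

* Since `C* ≤ m`, Fubini gives `∫ C*(∇f) ≤ ∫_K ‖∇_ξ f‖_p^p dξ`, and this is
  `n / (n + p) · vol K` by homogeneity. In polar coordinates `n · vol K = Z_p(f)^{-n}`.
* The support function of the centroid body of `K` is `(m / (a₁ vol K))^{1/p}`, so Young's
  inequality puts the centroid body inside a sublevel set of `C`. The Busemann–Petty inequality
  then bounds the volume of that sublevel set, hence `∫ e^{-C}`, from below in terms of `vol K`.

The two bounds multiply to exactly `𝓛_{n,p} 𝓔_p(f)^p`.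
-/

section GaugePower

open Module

/-- `F` is the `p`-th power of the gauge of a (not necessarily convex or symmetric) star body:
it is continuous, positive off the origin and positively homogeneous of degree `p > 0`.
Both the cost functions and the moment functions below are of this kind. -/
structure IsGaugePower {E : Type*} [NormedAddCommGroup E] [NormedSpace ℝ E] (p : ℝ)
    (F : E → ℝ) : Prop where
  degree_pos : 0 < p
  continuous : Continuous F
  map_smul : ∀ l : ℝ, 0 ≤ l → ∀ x, F (l • x) = l ^ p * F x
  pos : ∀ x, x ≠ 0 → 0 < F x

namespace IsGaugePower

variable {E : Type*} [NormedAddCommGroup E] [NormedSpace ℝ E] {p : ℝ} {F : E → ℝ}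

theorem map_zero (hF : IsGaugePower p F) : F 0 = 0 := by
  simpa [zero_rpow hF.degree_pos.ne'] using hF.map_smul 0 le_rfl 0

theorem nonneg (hF : IsGaugePower p F) (x : E) : 0 ≤ F x := by
  rcases eq_or_ne x 0 with rfl | hx
  exacts [hF.map_zero.ge, (hF.pos x hx).le]

theorem zero_mem_interior_sublevel (hF : IsGaugePower p F) :
    (0 : E) ∈ interior {x | F x ≤ 1} :=
  mem_interior.2 ⟨{x | F x < 1}, fun x (hx : F x < 1) => hx.le,
    isOpen_lt hF.continuous continuous_const, by simp [hF.map_zero]⟩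

theorem smul_sublevel_one (hF : IsGaugePower p F) {t : ℝ} (ht : 0 < t) :
    t ^ (1 / p) • {x | F x ≤ 1} = {x | F x ≤ t} := by
  have ht' : 0 < t ^ (1 / p) := rpow_pos_of_pos ht _
  ext x
  rw [Set.mem_smul_set_iff_inv_smul_mem₀ ht'.ne', Set.mem_ofPred_eq, Set.mem_ofPred_eq,
    hF.map_smul _ (inv_nonneg.2 ht'.le), inv_rpow ht'.le, ← rpow_mul ht.le,
    one_div_mul_cancel hF.degree_pos.ne', rpow_one, inv_mul_le_one₀ ht]

theorem lt_one_iff_norm_lt (hF : IsGaugePower p F) {x : E} (hx : x ≠ 0) :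
    F x < 1 ↔ ‖x‖ < F (‖x‖⁻¹ • x) ^ (-p⁻¹) := by
  have hnorm : 0 < ‖x‖ := norm_pos_iff.2 hx
  have hdirection : F (‖x‖⁻¹ • x) ^ (-p⁻¹) = ‖x‖ * F x ^ (-p⁻¹) := by
    rw [hF.map_smul _ (inv_nonneg.2 hnorm.le), mul_rpow (by positivity) (hF.nonneg x),
      inv_rpow hnorm.le, rpow_neg (by positivity), inv_rpow (by positivity), inv_inv,
      rpow_rpow_inv hnorm.le hF.degree_pos.ne']
  rw [hdirection, lt_mul_iff_one_lt_right hnorm, rpow_neg (hF.nonneg x),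
    one_lt_inv₀ (rpow_pos_of_pos (hF.pos x hx) _),
    rpow_lt_one_iff' (hF.nonneg x) (inv_pos.2 hF.degree_pos)]

section ProperSpace

variable [ProperSpace E]

theorem exists_mul_norm_rpow_le (hF : IsGaugePower p F) :
    ∃ m : ℝ, 0 < m ∧ ∀ x, m * ‖x‖ ^ p ≤ F x := by
  rcases subsingleton_or_nontrivial E with hE | hE
  · refine ⟨1, one_pos, fun x => ?_⟩
    simp [Subsingleton.elim x 0, zero_rpow hF.degree_pos.ne', hF.map_zero]
  obtain ⟨u, hu, hmin⟩ := (isCompact_sphere (0 : E) 1).exists_isMinOn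
    (NormedSpace.sphere_nonempty.2 zero_le_one) hF.continuous.continuousOn
  refine ⟨F u, hF.pos u (ne_zero_of_mem_unit_sphere ⟨u, hu⟩), fun x => ?_⟩
  rcases eq_or_ne x 0 with rfl | hx
  · simpa [zero_rpow hF.degree_pos.ne'] using hF.nonneg 0
  · have hnormalized : F u ≤ F (‖x‖⁻¹ • x) := hmin (by simp [norm_smul, hx])
    calc F u * ‖x‖ ^ p ≤ F (‖x‖⁻¹ • x) * ‖x‖ ^ p := by gcongr
      _ = F x := by
        rw [mul_comm, ← hF.map_smul _ (norm_nonneg x), smul_inv_smul₀ (norm_ne_zero_iff.2 hx)]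

theorem isCompact_sublevel (hF : IsGaugePower p F) (t : ℝ) : IsCompact {x | F x ≤ t} := by
  refine Metric.isCompact_of_isClosed_isBounded (isClosed_le hF.continuous continuous_const) ?_
  obtain ⟨m, hm, hle⟩ := hF.exists_mul_norm_rpow_le
  refine isBounded_iff_forall_norm_le.2 ⟨(t / m) ^ p⁻¹, fun x hx => ?_⟩
  have hx' : ‖x‖ ^ p ≤ t / m := (le_div_iff₀' hm).2 ((hle x).trans hx)
  exact (le_rpow_inv_iff_of_pos (norm_nonneg x) ((rpow_nonneg (norm_nonneg x) p).trans hx')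
    hF.degree_pos).2 hx'

end ProperSpace

section Haar

variable [MeasurableSpace E] (μ : Measure E)

theorem measure_sublevel_one_ne_zero [μ.IsOpenPosMeasure] (hF : IsGaugePower p F) :
    μ {x | F x ≤ 1} ≠ 0 :=
  (Measure.measure_pos_of_nonempty_interior μ ⟨0, hF.zero_mem_interior_sublevel⟩).ne'

variable [FiniteDimensional ℝ E] [μ.IsAddHaarMeasure]

theorem measureReal_sublevel_one_pos (hF : IsGaugePower p F) : 0 < μ.real {x | F x ≤ 1} :=
  ENNReal.toReal_pos (hF.measure_sublevel_one_ne_zero μ)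
    (hF.isCompact_sublevel 1).measure_ne_top

variable [BorelSpace E]

theorem measureReal_sublevel (hF : IsGaugePower p F) {t : ℝ} (ht : 0 < t) :
    μ.real {x | F x ≤ t} = t ^ (finrank ℝ E / p) * μ.real {x | F x ≤ 1} := by
  rw [← hF.smul_sublevel_one ht, measureReal_def, Measure.addHaar_smul, ENNReal.toReal_mul,
    ENNReal.toReal_ofReal (abs_nonneg _), abs_of_pos (by positivity), ← rpow_natCast,
    ← rpow_mul ht.le, one_div_mul_eq_div, measureReal_def]

variable [Nontrivial E]

theorem measure_rpow_preimage_Iic (hF : IsGaugePower p F) (t : ℝ) :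
    μ ((fun x => F x ^ (finrank ℝ E / p)) ⁻¹' Set.Iic t) =
      ENNReal.ofReal (μ.real {x | F x ≤ 1}) * ENNReal.ofReal t := by
  have hd : 0 < finrank ℝ E / p := div_pos (by exact_mod_cast finrank_pos) hF.degree_pos
  rcases le_or_gt t 0 with ht | ht
  · rw [ENNReal.ofReal_of_nonpos ht, mul_zero]
    refine measure_mono_null (fun x hx => ?_) (measure_singleton (0 : E))
    by_contra hx0
    exact ((rpow_pos_of_pos (hF.pos x hx0) _).trans_le hx).not_ge ht
  · have hpre : (fun x => F x ^ (finrank ℝ E / p)) ⁻¹' Set.Iic t =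
        {x | F x ≤ t ^ (finrank ℝ E / p)⁻¹} := by
      ext x
      exact (le_rpow_inv_iff_of_pos (hF.nonneg x) ht.le hd).symm
    rw [hpre, ← ofReal_measureReal (hF.isCompact_sublevel _).measure_ne_top,
      hF.measureReal_sublevel μ (by positivity), rpow_inv_rpow ht.le hd.ne',
      ← ENNReal.ofReal_mul measureReal_nonneg, mul_comm]

/-- By homogeneity, the normalised power `F ^ (d / p)` has degree `d = dim E`, so the measures of
its sublevel sets grow linearly. -/
theorem map_rpow_eq (hF : IsGaugePower p F) :
    μ.map (fun x => F x ^ (finrank ℝ E / p)) =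
      ENNReal.ofReal (μ.real {x | F x ≤ 1}) • volume.restrict (Set.Ioi (0 : ℝ)) := by
  set c := ENNReal.ofReal (μ.real {x | F x ≤ 1})
  have hmeas : Measurable fun x => F x ^ (finrank ℝ E / p) :=
    hF.continuous.measurable.pow_const _
  have hmap (t : ℝ) : μ.map (fun x => F x ^ (finrank ℝ E / p)) (Set.Iic t) =
      c * ENNReal.ofReal t := by
    rw [Measure.map_apply hmeas measurableSet_Iic, hF.measure_rpow_preimage_Iic μ]
  have hlebesgue (t : ℝ) : (c • volume.restrict (Set.Ioi (0 : ℝ))) (Set.Iic t) =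
      c * ENNReal.ofReal t := by
    rw [Measure.smul_apply, Measure.restrict_apply measurableSet_Iic, Set.inter_comm,
      Set.Ioi_inter_Iic, Real.volume_Ioc, sub_zero, smul_eq_mul]
  have hfin (t : ℝ) : c * ENNReal.ofReal t ≠ ⊤ :=
    ENNReal.mul_ne_top ENNReal.ofReal_ne_top ENNReal.ofReal_ne_top
  have hIoc (ν : Measure ℝ) (hν : ∀ t, ν (Set.Iic t) = c * ENNReal.ofReal t) (a b : ℝ)
      (hab : a < b) : ν (Set.Ioc a b) = c * ENNReal.ofReal b - c * ENNReal.ofReal a := by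
    rw [← Set.Iic_sdiff_Iic, measure_sdiff (Set.Iic_subset_Iic.2 hab.le)
      measurableSet_Iic.nullMeasurableSet (hν a ▸ hfin a), hν, hν]
  refine Measure.ext_of_Ioc' _ _ (fun a b hab => ?_) fun a b hab => ?_
  · rw [hIoc _ hmap a b hab]
    exact ENNReal.sub_ne_top (hfin b)
  · rw [hIoc _ hmap a b hab, hIoc _ hlebesgue a b hab]

theorem integral_comp_rpow (hF : IsGaugePower p F) {g : ℝ → ℝ} (hg : Measurable g) :
    ∫ x, g (F x ^ (finrank ℝ E / p)) ∂μ =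
      μ.real {x | F x ≤ 1} * ∫ u in Set.Ioi (0 : ℝ), g u := by
  rw [← integral_map (f := g) (hF.continuous.measurable.pow_const _).aemeasurable
      hg.aestronglyMeasurable, hF.map_rpow_eq μ, integral_smul_measure,
    ENNReal.toReal_ofReal measureReal_nonneg, smul_eq_mul]

theorem integral_comp (hF : IsGaugePower p F) {g : ℝ → ℝ} (hg : Measurable g) :
    ∫ x, g (F x) ∂μ =
      μ.real {x | F x ≤ 1} * ∫ u in Set.Ioi (0 : ℝ), g (u ^ (p / finrank ℝ E)) := by
  have hd : (finrank ℝ E : ℝ) ≠ 0 := by exact_mod_cast finrank_pos.ne'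
  rw [← hF.integral_comp_rpow μ (g := fun u => g (u ^ (p / finrank ℝ E))) (by fun_prop)]
  refine integral_congr_ae (.of_forall fun x => ?_)
  have hcancel : finrank ℝ E / p * (p / finrank ℝ E) = 1 := by
    field_simp [hF.degree_pos.ne']
  simp only [← rpow_mul (hF.nonneg x), hcancel, rpow_one]

theorem integral_exp_neg (hF : IsGaugePower p F) :
    ∫ x, exp (-F x) ∂μ = Gamma (finrank ℝ E / p + 1) * μ.real {x | F x ≤ 1} := by
  have hd : (0 : ℝ) < finrank ℝ E := by exact_mod_cast finrank_pos
  rw [hF.integral_comp μ (g := fun t => exp (-t)) (by fun_prop),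
    integral_exp_neg_rpow (div_pos hF.degree_pos hd), one_div_div, mul_comm]

theorem setIntegral_sublevel_one (hF : IsGaugePower p F) :
    ∫ x in {x | F x ≤ 1}, F x ∂μ =
      finrank ℝ E / (finrank ℝ E + p) * μ.real {x | F x ≤ 1} := by
  have hp := hF.degree_pos
  have hd : (0 : ℝ) < finrank ℝ E := by exact_mod_cast finrank_pos
  have hs : 0 < p / finrank ℝ E := div_pos hp hd
  have hradial : ∫ u in Set.Ioi (0 : ℝ),
      (Set.Iic (1 : ℝ)).indicator id (u ^ (p / finrank ℝ E)) =
        ∫ u in (0 : ℝ)..1, u ^ (p / finrank ℝ E) := by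
    rw [intervalIntegral.integral_of_le zero_le_one, ← Set.Ioi_inter_Iic, Set.inter_comm,
      ← Measure.restrict_restrict measurableSet_Iic, ← integral_indicator measurableSet_Iic]
    refine setIntegral_congr_fun measurableSet_Ioi fun u (hu : 0 < u) => ?_
    simp only [Set.indicator, Set.mem_Iic, rpow_le_one_iff_of_pos hu, hs.not_ge, hs.le]
    grind
  calc ∫ x in {x | F x ≤ 1}, F x ∂μ = ∫ x, (Set.Iic (1 : ℝ)).indicator id (F x) ∂μ :=
        (integral_indicator (hF.continuous.measurable measurableSet_Iic)).symm
    _ = μ.real {x | F x ≤ 1} * ∫ u in (0 : ℝ)..1, u ^ (p / finrank ℝ E) := by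
        rw [hF.integral_comp μ (measurable_id.indicator measurableSet_Iic), hradial]
    _ = finrank ℝ E / (finrank ℝ E + p) * μ.real {x | F x ≤ 1} := by
        rw [integral_rpow (.inl (by linarith)), one_rpow, zero_rpow (by positivity)]
        field_simp
        ring

theorem measure_sublevel_lt_one (hF : IsGaugePower p F) :
    μ {x | F x < 1} = ENNReal.ofReal (μ.real {x | F x ≤ 1}) := by
  have hd : 0 < finrank ℝ E / p := div_pos (by exact_mod_cast finrank_pos) hF.degree_pos
  have hpre : {x | F x < 1} = (fun x => F x ^ (finrank ℝ E / p)) ⁻¹' Set.Iio 1 := by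
    ext x
    exact (rpow_lt_one_iff' (hF.nonneg x) hd).symm
  rw [hpre, ← Measure.map_apply (hF.continuous.measurable.pow_const _) measurableSet_Iio,
    hF.map_rpow_eq μ, Measure.smul_apply, Measure.restrict_apply measurableSet_Iio,
    Set.inter_comm, Set.Ioi_inter_Iio, Real.volume_Ioo, sub_zero, ENNReal.ofReal_one, smul_eq_mul,
    mul_one]

theorem measure_sublevel_lt_one_eq_lintegral_toSphere (hF : IsGaugePower p F) :
    μ {x | F x < 1} = ∫⁻ ξ : Metric.sphere (0 : E) 1,
      ENNReal.ofReal (F ξ ^ (-(finrank ℝ E / p)) / finrank ℝ E) ∂μ.toSphere := by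
  have hFpos (ξ : Metric.sphere (0 : E) 1) : 0 < F ξ := hF.pos _ (ne_zero_of_mem_unit_sphere ξ)
  set radius : Metric.sphere (0 : E) 1 → Set.Ioi (0 : ℝ) :=
    fun ξ => ⟨F ξ ^ (-p⁻¹), rpow_pos_of_pos (hFpos ξ) _⟩
  have hradius : Measurable radius :=
    ((hF.continuous.measurable.comp measurable_subtype_coe).pow_const _).subtype_mk
  have hpreimage : (Subtype.val ⁻¹' {x | F x < 1} : Set ({0}ᶜ : Set E)) =
      homeomorphUnitSphereProd E ⁻¹' {z | z.2 < radius z.1} := by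
    ext ⟨x, hx⟩
    simpa [← Subtype.coe_lt_coe, radius] using hF.lt_one_iff_norm_lt hx
  calc μ {x | F x < 1} = μ.comap (Subtype.val : ({0}ᶜ : Set E) → E)
        (Subtype.val ⁻¹' {x | F x < 1}) := by
        have hmeas : MeasurableSet ({0}ᶜ : Set E) := (measurableSet_singleton _).compl
        rw [comap_subtype_coe_apply hmeas, Subtype.image_preimage_coe, Set.inter_comm,
          ← Measure.restrict_apply' hmeas, restrict_compl_singleton]
    _ = (μ.toSphere.prod (.volumeIoiPow (finrank ℝ E - 1))) {z | z.2 < radius z.1} := by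
        rw [hpreimage, μ.measurePreserving_homeomorphUnitSphereProd.measure_preimage_emb
          (Homeomorph.measurableEmbedding _)]
    _ = ∫⁻ ξ, Measure.volumeIoiPow (finrank ℝ E - 1) (Set.Iio (radius ξ)) ∂μ.toSphere :=
        Measure.prod_apply (measurableSet_lt measurable_snd (hradius.comp measurable_fst))
    _ = _ := by
        refine lintegral_congr fun ξ => ?_
        rw [Measure.volumeIoiPow_apply_Iio, ← Nat.cast_add_one, Nat.sub_add_cancel finrank_pos,
          ← rpow_natCast, ← rpow_mul (hFpos ξ).le]
        ring_nf

theorem measureReal_sublevel_one_eq_integral_toSphere (hF : IsGaugePower p F) :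
    finrank ℝ E * μ.real {x | F x ≤ 1} =
      ∫ ξ : Metric.sphere (0 : E) 1, F ξ ^ (-(finrank ℝ E / p)) ∂μ.toSphere := by
  have hd : (finrank ℝ E : ℝ) ≠ 0 := by exact_mod_cast finrank_pos.ne'
  have hvolume := congrArg ENNReal.toReal
    ((hF.measure_sublevel_lt_one μ).symm.trans
      (hF.measure_sublevel_lt_one_eq_lintegral_toSphere μ))
  have hmeas : Measurable fun ξ : Metric.sphere (0 : E) 1 => F ξ ^ (-(finrank ℝ E / p)) :=
    (hF.continuous.measurable.comp measurable_subtype_coe).pow_const _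
  rw [ENNReal.toReal_ofReal measureReal_nonneg, ← integral_eq_lintegral_of_nonneg_ae
    (.of_forall fun ξ => div_nonneg (rpow_nonneg (hF.nonneg _) _) (Nat.cast_nonneg _))
    (hmeas.div_const _).aestronglyMeasurable, integral_div] at hvolume
  rw [hvolume, mul_div_cancel₀ _ hd]

end Haar

end IsGaugePower

end GaugePower

section AbsMoment

/-- The `p`-th absolute moment function `v ↦ ∫ |⟨a y, v⟩|^p dμ(y)` of a vector field `a`.
For the position vector on a body this is, up to normalisation, the `p`-th power of the support
function of the `L_p` centroid body; for `a = ∇f` it is `‖∇_v f‖_p^p`. -/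
def absMoment {α E : Type*} [MeasurableSpace α] [NormedAddCommGroup E] [InnerProductSpace ℝ E]
    (p : ℝ) (a : α → E) (μ : Measure α) (v : E) : ℝ :=
  ∫ y, |⟪a y, v⟫| ^ p ∂μ

theorem integrable_norm_rpow_of_memLp {α E : Type*} [MeasurableSpace α] [NormedAddCommGroup E]
    {μ : Measure α} {a : α → E} {p : ℝ} (hp : 0 < p) (ha : MemLp a (.ofReal p) μ) :
    Integrable (fun y => ‖a y‖ ^ p) μ := by
  simpa only [ENNReal.toReal_ofReal hp.le] using
    ha.integrable_norm_rpow (ENNReal.ofReal_pos.2 hp).ne' ENNReal.ofReal_ne_top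

variable {α E : Type*} [MeasurableSpace α] [NormedAddCommGroup E] [InnerProductSpace ℝ E]
  {μ : Measure α} {a : α → E} {p : ℝ}

theorem abs_inner_rpow_le (hp : 0 ≤ p) (x v : E) : |⟪x, v⟫| ^ p ≤ ‖x‖ ^ p * ‖v‖ ^ p := by
  rw [← mul_rpow (norm_nonneg _) (norm_nonneg _)]
  exact rpow_le_rpow (abs_nonneg _) (abs_real_inner_le_norm x v) hp

theorem integrable_abs_inner_rpow (hp : 0 < p) (ha : MemLp a (.ofReal p) μ) (v : E) :
    Integrable (fun y => |⟪a y, v⟫| ^ p) μ := by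
  refine ((integrable_norm_rpow_of_memLp hp ha).mul_const (‖v‖ ^ p)).mono' ?_
    (.of_forall fun y => ?_)
  · exact (continuous_abs.rpow_const fun _ => .inr hp.le).comp_aestronglyMeasurable
      (ha.1.inner aestronglyMeasurable_const)
  · rw [norm_of_nonneg (by positivity)]
    exact abs_inner_rpow_le hp.le _ _

theorem absMoment_nonneg (v : E) : 0 ≤ absMoment p a μ v :=
  integral_nonneg fun _ => rpow_nonneg (abs_nonneg _) _

theorem absMoment_neg (v : E) : absMoment p a μ (-v) = absMoment p a μ v := by
  simp only [absMoment, inner_neg_right, abs_neg]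

theorem absMoment_smul {l : ℝ} (hl : 0 ≤ l) (v : E) :
    absMoment p a μ (l • v) = l ^ p * absMoment p a μ v := by
  simp only [absMoment, inner_smul_right, abs_mul, abs_of_nonneg hl, mul_rpow hl (abs_nonneg _),
    integral_const_mul]

theorem absMoment_pos (hp : 0 < p) (ha : MemLp a (.ofReal p) μ) {v : E}
    (hv : ¬ ∀ᵐ y ∂μ, ⟪a y, v⟫ = 0) : 0 < absMoment p a μ v := by
  refine (absMoment_nonneg v).lt_of_ne' fun h0 => hv ?_
  filter_upwards [(integral_eq_zero_iff_of_nonneg (fun _ => rpow_nonneg (abs_nonneg _) _)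
    (integrable_abs_inner_rpow hp ha v)).1 h0] with y hy
  exact abs_eq_zero.1 ((rpow_eq_zero (abs_nonneg _) hp.ne').1 hy)

theorem convexOn_abs_rpow (hp : 1 ≤ p) : ConvexOn ℝ Set.univ (fun t : ℝ => |t| ^ p) := by
  refine ⟨convex_univ, fun x _ y _ s t hs ht hst => ?_⟩
  calc |s • x + t • y| ^ p ≤ (s • |x| + t • |y|) ^ p := by
        refine rpow_le_rpow (abs_nonneg _) ((abs_add_le _ _).trans_eq ?_) (by linarith)
        simp only [smul_eq_mul, abs_mul, abs_of_nonneg hs, abs_of_nonneg ht]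
    _ ≤ s • |x| ^ p + t • |y| ^ p :=
        (convexOn_rpow hp).2 (abs_nonneg x) (abs_nonneg y) hs ht hst

theorem convexOn_absMoment (hp : 1 ≤ p) (ha : MemLp a (.ofReal p) μ) :
    ConvexOn ℝ Set.univ (absMoment p a μ) := by
  have hint := integrable_abs_inner_rpow (by linarith) ha
  refine ⟨convex_univ, fun v _ w _ s t hs ht hst => ?_⟩
  simp only [absMoment, smul_eq_mul]
  rw [← integral_const_mul, ← integral_const_mul,
    ← integral_add ((hint v).const_mul s) ((hint w).const_mul t)]
  refine integral_mono (hint _) (((hint v).const_mul s).add ((hint w).const_mul t)) fun y => ?_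
  simpa only [inner_add_right, inner_smul_right, smul_eq_mul] using
    (convexOn_abs_rpow hp).2 (Set.mem_univ ⟪a y, v⟫) (Set.mem_univ ⟪a y, w⟫) hs ht hst

theorem isGaugePower_absMoment [FiniteDimensional ℝ E] (hp : 1 ≤ p) (ha : MemLp a (.ofReal p) μ)
    (hnondeg : ∀ v ≠ 0, ¬ ∀ᵐ y ∂μ, ⟪a y, v⟫ = 0) : IsGaugePower p (absMoment p a μ) where
  degree_pos := by linarith
  continuous := (convexOn_absMoment hp ha).locallyLipschitz.continuous
  map_smul _ hl := absMoment_smul hl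
  pos v hv := absMoment_pos (by linarith) ha (hnondeg v hv)

theorem norm_deriv_abs_inner_rpow_le (hp : 1 < p) (x e : E) {w : E} {R : ℝ} (hw : ‖w‖ ≤ R) :
    ‖p * |⟪x, w⟫| ^ (p - 2) * ⟪x, w⟫ * ⟪x, e⟫‖ ≤ ‖x‖ ^ p * (p * R ^ (p - 1) * ‖e‖) := by
  have hderiv (u : ℝ) : |p * |u| ^ (p - 2) * u| = p * |u| ^ (p - 1) := by
    rcases eq_or_ne u 0 with rfl | hu
    · simp [zero_rpow (by linarith : p - 1 ≠ 0)]
    · rw [abs_mul, abs_mul, abs_of_pos (by linarith : 0 < p), abs_of_nonneg (by positivity),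
        mul_assoc, ← rpow_add_one (abs_pos.2 hu).ne']
      ring_nf
  have hR : 0 ≤ R := (norm_nonneg w).trans hw
  have hinner : |⟪x, w⟫| ^ (p - 1) ≤ ‖x‖ ^ (p - 1) * R ^ (p - 1) :=
    (abs_inner_rpow_le (by linarith) x w).trans (by gcongr)
  have hsplit : ‖x‖ ^ p = ‖x‖ ^ (p - 1) * ‖x‖ := by
    conv_lhs => rw [← sub_add_cancel p 1]
    rw [rpow_add_one' (norm_nonneg x) (by linarith)]
  calc ‖p * |⟪x, w⟫| ^ (p - 2) * ⟪x, w⟫ * ⟪x, e⟫‖ = p * |⟪x, w⟫| ^ (p - 1) * |⟪x, e⟫| := by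
        rw [norm_mul, norm_eq_abs, hderiv, norm_eq_abs]
    _ ≤ p * (‖x‖ ^ (p - 1) * R ^ (p - 1)) * (‖x‖ * ‖e‖) := by
        gcongr
        exact abs_real_inner_le_norm x e
    _ = ‖x‖ ^ p * (p * R ^ (p - 1) * ‖e‖) := by
        rw [hsplit]
        ring

theorem lineDifferentiableAt_absMoment (hp : 1 < p) (ha : MemLp a (.ofReal p) μ) (v e : E) :
    LineDifferentiableAt ℝ (absMoment p a μ) v e := by
  have hp0 : 0 < p := by linarith
  have hint := integrable_abs_inner_rpow hp0 ha
  have hmeas (w : E) : AEMeasurable (fun y => ⟪a y, w⟫) μ :=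
    (ha.1.inner aestronglyMeasurable_const).aemeasurable
  refine (hasDerivAt_integral_of_dominated_loc_of_deriv_le (Metric.ball_mem_nhds (0 : ℝ) one_pos)
    (F := fun (t : ℝ) y => |⟪a y, v + t • e⟫| ^ p)
    (F' := fun t y => p * |⟪a y, v + t • e⟫| ^ (p - 2) * ⟪a y, v + t • e⟫ * ⟪a y, e⟫)
    (bound := fun y => ‖a y‖ ^ p * (p * (‖v‖ + ‖e‖) ^ (p - 1) * ‖e‖))
    (.of_forall fun t => (hint _).aestronglyMeasurable) (hint _) ?_ ?_
    ((integrable_norm_rpow_of_memLp hp0 ha).mul_const _) ?_).2.differentiableAt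
  · exact AEMeasurable.aestronglyMeasurable (by fun_prop)
  · refine .of_forall fun y t ht => norm_deriv_abs_inner_rpow_le hp _ _ ?_
    calc ‖v + t • e‖ ≤ ‖v‖ + |t| * ‖e‖ := by
          rw [← norm_eq_abs, ← norm_smul]
          exact norm_add_le _ _
      _ ≤ ‖v‖ + ‖e‖ := by
          have ht' : |t| ≤ 1 := by simpa using (mem_ball_zero_iff.1 ht).le
          gcongr
          exact mul_le_of_le_one_left (norm_nonneg _) ht'
  · refine .of_forall fun y t _ => (hasDerivAt_abs_rpow _ hp).comp t ?_
    simpa only [inner_add_right, inner_smul_right, one_mul, id] using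
      ((hasDerivAt_id t).mul_const ⟪a y, e⟫).const_add ⟪a y, v⟫

theorem integrable_prod_abs_inner_rpow {β : Type*} [MeasurableSpace β] {ν : Measure β} {b : β → E}
    (hp : 0 < p) (ha : MemLp a (.ofReal p) μ) (hb : MemLp b (.ofReal p) ν) :
    Integrable (fun z : α × β => |⟪b z.2, a z.1⟫| ^ p) (μ.prod ν) := by
  refine ((integrable_norm_rpow_of_memLp hp ha).mul_prod
    (integrable_norm_rpow_of_memLp hp hb)).mono'
    ((continuous_abs.rpow_const fun _ => .inr hp.le).comp_aestronglyMeasurable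
      (hb.1.comp_snd.inner ha.1.comp_fst))
    (.of_forall fun z => ?_)
  rw [norm_of_nonneg (by positivity), mul_comm]
  exact abs_inner_rpow_le hp.le _ _

theorem integral_absMoment_comm {β : Type*} [MeasurableSpace β] {ν : Measure β} {b : β → E}
    [SFinite μ] [SFinite ν] (hp : 0 < p) (ha : MemLp a (.ofReal p) μ)
    (hb : MemLp b (.ofReal p) ν) :
    ∫ y, absMoment p b ν (a y) ∂μ = ∫ x, absMoment p a μ (b x) ∂ν := by
  simp only [absMoment]
  rw [integral_integral_swap (integrable_prod_abs_inner_rpow hp ha hb)]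
  simp only [real_inner_comm]

section Body

variable [FiniteDimensional ℝ E] [MeasurableSpace E] [BorelSpace E] {ν : Measure E}
  [ν.IsAddHaarMeasure] {K : Set E}

theorem not_ae_restrict_inner_eq_zero (hK : ν K ≠ 0) {v : E} (hv : v ≠ 0) :
    ¬ ∀ᵐ x ∂ν.restrict K, ⟪x, v⟫ = 0 := by
  intro hzero
  have hproper : (ℝ ∙ v)ᗮ ≠ ⊤ := by
    rwa [Ne, Submodule.orthogonal_eq_top_iff, Submodule.span_singleton_eq_bot]
  have hnull : ∀ᵐ x ∂ν.restrict K, x ∉ (ℝ ∙ v)ᗮ :=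
    ae_restrict_of_ae (measure_eq_zero_iff_ae_notMem.1 (Measure.addHaar_submodule ν _ hproper))
  have hfalse : ∀ᵐ _ ∂ν.restrict K, False := by
    filter_upwards [hzero, hnull] with x hx hx'
    exact hx' (Submodule.mem_orthogonal_singleton_iff_inner_left.2 hx)
  exact hK (Measure.restrict_eq_zero.1
    (ae_eq_bot.1 (Filter.eventually_false_iff_eq_bot.1 hfalse)))

theorem memLp_id_restrict (hK : IsCompact K) : MemLp id (.ofReal p) (ν.restrict K) := by
  have : IsFiniteMeasure (ν.restrict K) := isFiniteMeasure_restrict.2 hK.measure_ne_top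
  obtain ⟨R, hR⟩ := hK.isBounded.exists_norm_le
  exact .of_bound aestronglyMeasurable_id R
    (ae_restrict_of_forall_mem hK.measurableSet fun x hx => hR x hx)

theorem isGaugePower_absMoment_restrict (hp : 1 ≤ p) (hK : IsCompact K) (hK0 : ν K ≠ 0) :
    IsGaugePower p (absMoment p id (ν.restrict K)) :=
  isGaugePower_absMoment hp (memLp_id_restrict hK) fun _ => not_ae_restrict_inner_eq_zero hK0

end Body

end AbsMoment

section Legendre

variable {n : ℕ} {p q : ℝ} {C G : EuclideanSpace ℝ (Fin n) → ℝ}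

theorem inner_sub_le_legendre {x : EuclideanSpace ℝ (Fin n)}
    (hb : BddAbove (Set.range fun y => ⟪x, y⟫ - C y)) (y : EuclideanSpace ℝ (Fin n)) :
    ⟪x, y⟫ - C y ≤ legendre C x :=
  le_ciSup hb y

theorem convexOn_legendre (hb : ∀ x, BddAbove (Set.range fun y => ⟪x, y⟫ - C y)) :
    ConvexOn ℝ Set.univ (legendre C) := by
  refine ⟨convex_univ, fun x _ z _ s t hs ht hst => ciSup_le fun y => ?_⟩
  calc ⟪s • x + t • z, y⟫ - C y = s * (⟪x, y⟫ - C y) + t * (⟪z, y⟫ - C y) := by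
        rw [inner_add_left, real_inner_smul_left, real_inner_smul_left]
        linear_combination C y * hst
    _ ≤ s • legendre C x + t • legendre C z :=
        add_le_add (mul_le_mul_of_nonneg_left (inner_sub_le_legendre (hb x) y) hs)
          (mul_le_mul_of_nonneg_left (inner_sub_le_legendre (hb z) y) ht)

theorem legendre_legendre_le (hb : ∀ x, BddAbove (Set.range fun y => ⟪x, y⟫ - G y))
    (x : EuclideanSpace ℝ (Fin n)) : legendre (legendre G) x ≤ G x := by
  refine ciSup_le fun y => ?_
  rw [sub_le_comm, real_inner_comm]
  exact inner_sub_le_legendre (hb y) x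

theorem legendre_neg (heven : ∀ x, G (-x) = G x) (x : EuclideanSpace ℝ (Fin n)) :
    legendre G (-x) = legendre G x := by
  unfold legendre
  rw [← (Equiv.neg (EuclideanSpace ℝ (Fin n))).iSup_comp]
  simp only [Equiv.neg_apply, inner_neg_neg, heven]

theorem legendre_zero (h0 : C 0 = 0) (hC : ∀ x, 0 ≤ C x) : legendre C 0 = 0 := by
  have hle (y : EuclideanSpace ℝ (Fin n)) : ⟪(0 : EuclideanSpace ℝ (Fin n)), y⟫ - C y ≤ 0 := by
    simpa using hC y
  refine le_antisymm (ciSup_le hle) ?_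
  simpa [h0] using inner_sub_le_legendre ⟨0, Set.forall_mem_range.2 hle⟩ 0

namespace IsGaugePower

theorem exists_isMax_inner_sub (hG : IsGaugePower p G) (hp : 1 < p)
    (y : EuclideanSpace ℝ (Fin n)) : ∃ x, ∀ z, ⟪y, z⟫ - G z ≤ ⟪y, x⟫ - G x := by
  obtain ⟨m, hm, hle⟩ := hG.exists_mul_norm_rpow_le
  have hcont := hG.continuous
  refine (by fun_prop : Continuous fun z => ⟪y, z⟫ - G z).exists_forall_ge' 0 ?_
  have hsuperlinear : ∀ᶠ z in Filter.cocompact (EuclideanSpace ℝ (Fin n)),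
      ‖y‖ / m ≤ ‖z‖ ^ (p - 1) :=
    ((tendsto_rpow_atTop (by linarith : 0 < p - 1)).comp
      (tendsto_norm_cocompact_atTop (E := EuclideanSpace ℝ (Fin n)))).eventually_ge_atTop _
  filter_upwards [hsuperlinear] with z hz
  rw [inner_zero_right, hG.map_zero, sub_zero, sub_nonpos]
  calc ⟪y, z⟫ ≤ ‖y‖ * ‖z‖ := real_inner_le_norm y z
    _ ≤ m * ‖z‖ ^ (p - 1) * ‖z‖ := by
        gcongr
        exact (div_le_iff₀' hm).1 hz
    _ = m * ‖z‖ ^ p := by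
        rw [mul_assoc, ← rpow_add_one' (norm_nonneg z) (by linarith), sub_add_cancel]
    _ ≤ G z := hle z

theorem bddAbove_inner_sub (hG : IsGaugePower p G) (hp : 1 < p)
    (y : EuclideanSpace ℝ (Fin n)) : BddAbove (Set.range fun z => ⟪y, z⟫ - G z) :=
  let ⟨x, hx⟩ := hG.exists_isMax_inner_sub hp y
  ⟨⟪y, x⟫ - G x, Set.forall_mem_range.2 hx⟩

theorem legendre_smul (hG : IsGaugePower p G) (hpq : p.HolderConjugate q) {l : ℝ} (hl : 0 ≤ l)
    (x : EuclideanSpace ℝ (Fin n)) : legendre G (l • x) = l ^ q * legendre G x := by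
  rcases hl.eq_or_lt with rfl | hl
  · rw [zero_smul, legendre_zero hG.map_zero hG.nonneg, zero_rpow hpq.symm.ne_zero, zero_mul]
  have hscale : l ^ (q - 1) ≠ 0 := (rpow_pos_of_pos hl _).ne'
  unfold legendre
  rw [Real.mul_iSup_of_nonneg (by positivity),
    ← (Equiv.smulRight hscale : EuclideanSpace ℝ (Fin n) ≃ _).iSup_comp]
  congr 1
  funext y
  have hlinear : l * l ^ (q - 1) = l ^ q := by
    rw [mul_comm, ← rpow_add_one hl.ne', sub_add_cancel]
  have hpower : (l ^ (q - 1)) ^ p = l ^ q := by rw [← rpow_mul hl.le, hpq.symm.sub_one_mul_conj]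
  rw [Equiv.smulRight_apply, inner_smul_right, real_inner_smul_left,
    hG.map_smul _ (by positivity), hpower]
  linear_combination ⟪x, y⟫ * hlinear

theorem legendre_pos (hG : IsGaugePower p G) (hp : 1 < p) {x : EuclideanSpace ℝ (Fin n)}
    (hx : x ≠ 0) : 0 < legendre G x := by
  have hxx : 0 < ⟪x, x⟫ := real_inner_self_pos.2 hx
  have hGx : 0 < G x := hG.pos x hx
  obtain ⟨t, ht, htp⟩ : ∃ t : ℝ, 0 < t ∧ t ^ (p - 1) = ⟪x, x⟫ / (2 * G x) :=
    ⟨(⟪x, x⟫ / (2 * G x)) ^ (p - 1)⁻¹, by positivity,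
      rpow_inv_rpow (by positivity) (by linarith)⟩
  calc 0 < t * ⟪x, x⟫ / 2 := by positivity
    _ = ⟪x, t • x⟫ - G (t • x) := by
        rw [hG.map_smul t ht.le, inner_smul_right, ← sub_add_cancel p 1, rpow_add_one ht.ne',
          htp]
        field_simp
        ring
    _ ≤ legendre G x := inner_sub_le_legendre (hG.bddAbove_inner_sub hp x) (t • x)

end IsGaugePower

theorem isGaugePower_legendre (hG : IsGaugePower p G) (hpq : p.HolderConjugate q) :
    IsGaugePower q (legendre G) where
  degree_pos := hpq.symm.pos
  continuous := (convexOn_legendre (hG.bddAbove_inner_sub hpq.lt)).locallyLipschitz.continuous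
  map_smul _ hl := hG.legendre_smul hpq hl
  pos _ := hG.legendre_pos hpq.lt

theorem inner_eq_lineDeriv_of_isMax {x y : EuclideanSpace ℝ (Fin n)}
    (hy : ∀ w, ⟪y, w⟫ - G w ≤ ⟪y, x⟫ - G x) {e : EuclideanSpace ℝ (Fin n)}
    (hd : LineDifferentiableAt ℝ G x e) : ⟪y, e⟫ = lineDeriv ℝ G x e := by
  have hderiv : HasDerivAt (fun t : ℝ => (⟪y, x⟫ + t * ⟪y, e⟫) - G (x + t • e))
      (⟪y, e⟫ - lineDeriv ℝ G x e) 0 := by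
    refine HasDerivAt.sub ?_ hd.hasLineDerivAt
    simpa only [one_mul, id] using ((hasDerivAt_id (0 : ℝ)).mul_const ⟪y, e⟫).const_add ⟪y, x⟫
  have hmax : IsLocalMax (fun t : ℝ => (⟪y, x⟫ + t * ⟪y, e⟫) - G (x + t • e)) 0 := by
    refine .of_forall fun t => ?_
    simpa [inner_add_right, inner_smul_right] using hy (x + t • e)
  exact sub_eq_zero.1 (hmax.hasDerivAt_eq_zero hderiv)

/-- If `legendre G` were affine on a segment, one point would attain the supremum at both
endpoints, and differentiability of `G` there determines the endpoint. -/
theorem strictConvexOn_legendre (hG : IsGaugePower p G) (hp : 1 < p)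
    (hd : ∀ x e, LineDifferentiableAt ℝ G x e) : StrictConvexOn ℝ Set.univ (legendre G) := by
  have hb := hG.bddAbove_inner_sub hp
  refine ⟨convex_univ, fun y _ z _ hyz s t hs ht hst => ?_⟩
  obtain ⟨x, hx⟩ := hG.exists_isMax_inner_sub hp (s • y + t • z)
  have hy := inner_sub_le_legendre (hb y) x
  have hz := inner_sub_le_legendre (hb z) x
  have hstrict : ⟪y, x⟫ - G x < legendre G y ∨ ⟪z, x⟫ - G x < legendre G z := by
    by_contra! hattained
    refine hyz (ext_inner_right ℝ fun e => ?_)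
    rw [inner_eq_lineDeriv_of_isMax
        (fun w => (inner_sub_le_legendre (hb y) w).trans hattained.1) (hd x e),
      inner_eq_lineDeriv_of_isMax
        (fun w => (inner_sub_le_legendre (hb z) w).trans hattained.2) (hd x e)]
  calc legendre G (s • y + t • z) ≤ ⟪s • y + t • z, x⟫ - G x := ciSup_le hx
    _ = s * (⟪y, x⟫ - G x) + t * (⟪z, x⟫ - G x) := by
        rw [inner_add_left, real_inner_smul_left, real_inner_smul_left]
        linear_combination G x * hst
    _ < s * legendre G y + t * legendre G z := by
        rcases hstrict with h | h
        · exact add_lt_add_of_lt_of_le (by gcongr) (by gcongr)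
        · exact add_lt_add_of_le_of_lt (by gcongr) (by gcongr)

end Legendre

section Gradient

variable {E : Type*} [NormedAddCommGroup E] [InnerProductSpace ℝ E] [CompleteSpace E] {f : E → ℝ}

theorem continuous_gradient (hf : ContDiff ℝ 1 f) : Continuous (gradient f) :=
  (InnerProductSpace.toDual ℝ E).symm.continuous.comp (hf.continuous_fderiv one_ne_zero)

theorem hasCompactSupport_gradient (hf : HasCompactSupport f) : HasCompactSupport (gradient f) :=
  (hf.fderiv (𝕜 := ℝ)).comp_left (map_zero (InnerProductSpace.toDual ℝ E).symm)

theorem memLp_gradient [MeasurableSpace E] [BorelSpace E] {μ : Measure E}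
    [IsFiniteMeasureOnCompacts μ] (hf : ContDiff ℝ 1 f) (hs : HasCompactSupport f) (r : ENNReal) :
    MemLp (gradient f) r μ :=
  (continuous_gradient hf).memLp_of_hasCompactSupport (hasCompactSupport_gradient hs)

theorem eq_zero_of_inner_gradient_eq_zero (hf : Differentiable ℝ f) (hs : HasCompactSupport f)
    {ξ : E} (hξ : ξ ≠ 0) (h : ∀ y, ⟪gradient f y, ξ⟫ = 0) : f = 0 := by
  funext x
  have hline (t : ℝ) : HasDerivAt (fun t : ℝ => f (x + t • ξ)) 0 t := by
    have hpoint : HasDerivAt (fun t : ℝ => x + t • ξ) ξ t := by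
      simpa using ((hasDerivAt_id t).smul_const ξ).const_add x
    have hcomp := (hf (x + t • ξ)).hasFDerivAt.comp_hasDerivAt t hpoint
    rwa [← inner_gradient_left, h] at hcomp
  have hsupp : HasCompactSupport fun t : ℝ => f (x + t • ξ) :=
    hs.comp_isClosedEmbedding
      ((Homeomorph.addLeft x).isClosedEmbedding.comp (isClosedEmbedding_smul_left hξ))
  obtain ⟨t, ht⟩ : ∃ t : ℝ, f (x + t • ξ) = 0 := by
    rw [hasCompactSupport_iff_eventuallyEq, Filter.coclosedCompact_eq_cocompact] at hsupp
    exact hsupp.exists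
  have hconst := is_const_of_deriv_eq_zero (fun t => (hline t).differentiableAt)
    (fun t => (hline t).deriv) 0 t
  simpa [ht] using hconst

end Gradient

section Constants

variable {n : ℕ} {p q A : ℝ}

theorem omegaR_pos {s : ℝ} (hs : -2 < s) : 0 < omegaR s :=
  div_pos (rpow_pos_of_pos pi_pos _) (Gamma_pos_of_pos (by linarith))

theorem omegaR_two : omegaR 2 = π := by
  norm_num [omegaR]

theorem mul_omegaR {s : ℝ} (hs : 0 < s) : s * omegaR s = 2 * π * omegaR (s - 2) := by
  have hshift : (s - 2) / 2 + 1 = s / 2 := by ring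
  have hpow : π ^ (s / 2) = π ^ ((s - 2) / 2) * π := by rw [← rpow_add_one pi_ne_zero, hshift]
  have : 0 < Gamma (s / 2) := Gamma_pos_of_pos (by positivity)
  rw [omegaR, omegaR, Gamma_add_one (by positivity), hshift, hpow]
  field_simp

theorem aOne_pos (hp : 1 < p) : 0 < aOne n p :=
  have : (0 : ℝ) ≤ n := n.cast_nonneg
  div_pos (omegaR_pos (by linarith)) (mul_pos (mul_pos (omegaR_pos (by norm_num))
    (omegaR_pos (by linarith))) (omegaR_pos (by linarith)))

theorem omegaR_mul_div_eq_inv_aOne (hp : 1 < p) :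
    omegaR n * omegaR (p - 1) / (2 * omegaR (n + p - 2)) = (aOne n p * (n + p))⁻¹ := by
  have : (0 : ℝ) ≤ n := n.cast_nonneg
  have hωn : 0 < omegaR n := omegaR_pos (by linarith)
  have hωp : 0 < omegaR (p - 1) := omegaR_pos (by linarith)
  have hωnp : 0 < omegaR (n + p) := omegaR_pos (by linarith)
  have hωnp' : 0 < omegaR (n + p - 2) := omegaR_pos (by linarith)
  rw [aOne, omegaR_two]
  field_simp
  linear_combination mul_omegaR (s := n + p) (by linarith)

theorem logSobolevConst_eq [NeZero n] (hpq : p.HolderConjugate q) :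
    logSobolevConst n p = p / n * ((p - 1) / exp 1) ^ (p - 1) *
      (omegaR n * Gamma (n / q + 1)) ^ (-(p / n)) := by
  have hn : (0 : ℝ) < n := by exact_mod_cast Nat.pos_of_neZero n
  have hp := hpq.pos
  have hq := hpq.symm.pos
  have : 0 < Gamma (n / 2 + 1 : ℝ) := Gamma_pos_of_pos (by positivity)
  have : 0 < Gamma (n / q + 1) := Gamma_pos_of_pos (by positivity)
  have harg : (n : ℝ) * (p - 1) / p = n / q := by
    rw [hpq.conjugate_eq]
    field_simp
  have hpi : π ^ (-(p / 2)) = (π ^ (n / 2 : ℝ)) ^ (-(p / n)) := by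
    rw [← rpow_mul pi_pos.le]
    field_simp
  have hratio : (Gamma (n / 2 + 1) / Gamma (n / q + 1)) ^ (p / n) =
      (Gamma (n / q + 1) / Gamma (n / 2 + 1)) ^ (-(p / n)) := by
    rw [rpow_neg (by positivity), ← inv_rpow (by positivity), inv_div]
  rw [logSobolevConst, harg, hpi, hratio, mul_assoc, ← mul_rpow (by positivity) (by positivity),
    omegaR]
  ring_nf

theorem cnp_mul_rpow [NeZero n] (hp : 1 < p) {V : ℝ} (hV : 0 < V) :
    (cnp n p * (n * V) ^ (-(1 / (n : ℝ)))) ^ p =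
      (omegaR n / V) ^ (p / n) * (n / (aOne n p * (n + p))) := by
  have hn : (0 : ℝ) < n := by exact_mod_cast Nat.pos_of_neZero n
  have hωn : 0 < omegaR n := omegaR_pos (by linarith)
  have ha : 0 < aOne n p := aOne_pos hp
  have hfactor : (n * omegaR n * omegaR (p - 1) / (2 * omegaR (n + p - 2))) =
      n / (aOne n p * (n + p)) := by
    rw [div_eq_mul_inv (n : ℝ), ← omegaR_mul_div_eq_inv_aOne hp]
    ring
  have hcombine : (n * omegaR n) ^ (1 / n : ℝ) * (n * V) ^ (-(1 / n : ℝ)) =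
      (omegaR n / V) ^ (1 / n : ℝ) := by
    rw [rpow_neg (by positivity), ← div_eq_mul_inv, ← div_rpow (by positivity) (by positivity),
      mul_div_mul_left _ _ hn.ne']
  rw [cnp, hfactor, mul_right_comm, hcombine, mul_rpow (by positivity) (by positivity),
    ← rpow_mul (by positivity), ← rpow_mul (by positivity), one_div_mul_cancel (by linarith),
    rpow_one, one_div_mul_eq_div]

/-- For conjugate `p` and `q`, the maximum of `h ↦ h - A h^p` over `h ≥ 0`. With `A = a₁ vol K` it
bounds the cost function of a body `K` on its centroid body. -/
def youngLevel (p q A : ℝ) : ℝ := (p * A) ^ (-(q - 1)) / q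

theorem youngLevel_pos (hpq : p.HolderConjugate q) (hA : 0 < A) : 0 < youngLevel p q A :=
  div_pos (rpow_pos_of_pos (mul_pos hpq.pos hA) _) hpq.symm.pos

theorem youngLevel_rpow (hpq : p.HolderConjugate q) (hA : 0 < A) :
    youngLevel p q A ^ (-(p - 1)) = q ^ (p - 1) * (p * A) := by
  have hp := hpq.pos
  have hq := hpq.symm.pos
  have hexp : -(q - 1) * -(p - 1) = 1 := by linear_combination hpq.mul_eq_add
  rw [youngLevel, div_rpow (by positivity) hq.le, ← rpow_mul (by positivity), hexp, rpow_one,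
    rpow_neg hq.le, div_inv_eq_mul, mul_comm]

theorem sub_mul_rpow_le_youngLevel (hpq : p.HolderConjugate q) (hA : 0 < A) {h : ℝ}
    (hh : 0 ≤ h) : h - A * h ^ p ≤ youngLevel p q A := by
  have hp := hpq.pos
  have hpA : 0 < p * A := by positivity
  have hprod : h * (p * A) ^ (1 / p) * (p * A) ^ (-(1 / p)) = h := by
    rw [mul_assoc, ← rpow_add hpA, add_neg_cancel, rpow_zero, mul_one]
  have hfst : (h * (p * A) ^ (1 / p)) ^ p / p = A * h ^ p := by
    rw [mul_rpow hh (by positivity), ← rpow_mul hpA.le, one_div_mul_cancel hp.ne', rpow_one]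
    field_simp
  have hsnd : ((p * A) ^ (-(1 / p))) ^ q = (p * A) ^ (-(q - 1)) := by
    rw [← rpow_mul hpA.le, neg_mul, one_div_mul_eq_div, hpq.symm.div_conj_eq_sub_one]
  have hyoung := young_inequality_of_nonneg (a := h * (p * A) ^ (1 / p))
    (b := (p * A) ^ (-(1 / p))) (by positivity) (by positivity) hpq
  rw [hprod, hfst, hsnd] at hyoung
  exact sub_le_iff_le_add'.2 hyoung

end Constants

section CentroidBody

variable {n : ℕ} {p q : ℝ} {K : Set (EuclideanSpace ℝ (Fin n))}

/-- The cost function of a body `K`: the Legendre transform of its `p`-th moment function.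
When `K` is the polar projection body of `f`, the moment function is `Cfstar n p f` up to the
factor `n + p`, by integration in polar coordinates. -/
def momentCost (p : ℝ) (K : Set (EuclideanSpace ℝ (Fin n))) : EuclideanSpace ℝ (Fin n) → ℝ :=
  legendre (absMoment p id (volume.restrict K))

/-- The constant `𝓛_C` of Gentil's inequality for the cost `C`. -/
def gentilConst (n : ℕ) (p : ℝ) (C : EuclideanSpace ℝ (Fin n) → ℝ) : ℝ :=
  p ^ (p + 1) / (n * exp (p - 1) * (∫ x, exp (-C x)) ^ (p / n))

theorem isGaugePower_momentCost (hpq : p.HolderConjugate q) (hK : IsCompact K)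
    (hK0 : volume K ≠ 0) : IsGaugePower q (momentCost p K) :=
  isGaugePower_legendre (isGaugePower_absMoment_restrict hpq.lt.le hK hK0) hpq

theorem momentCost_neg (x : EuclideanSpace ℝ (Fin n)) :
    momentCost p K (-x) = momentCost p K x :=
  legendre_neg absMoment_neg x

theorem strictConvexOn_momentCost (hp : 1 < p) (hK : IsCompact K) (hK0 : volume K ≠ 0) :
    StrictConvexOn ℝ Set.univ (momentCost p K) :=
  strictConvexOn_legendre (isGaugePower_absMoment_restrict hp.le hK hK0) hp
    (lineDifferentiableAt_absMoment hp (memLp_id_restrict hK))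

theorem centroidBody_subset_sublevel_momentCost (hpq : p.HolderConjugate q)
    (hK : 0 < volume.real K) :
    centroidBody n p K ⊆ {x | momentCost p K x ≤ youngLevel p q (aOne n p * volume.real K)} := by
  intro x hx
  refine (ciSup_le fun v => ?_ : momentCost p K x ≤ _)
  set A := aOne n p * volume.real K
  set m := absMoment p id (volume.restrict K) v
  have hA : 0 < A := mul_pos (aOne_pos hpq.lt) hK
  have hm : 0 ≤ m := absMoment_nonneg v
  have hmoment : ∫ y in K, |⟪v, y⟫| ^ p = m := by
    simp only [m, absMoment, id, real_inner_comm v]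
  have hsupport : ⟪x, v⟫ ≤ (A⁻¹ * m) ^ (1 / p) := hmoment ▸ hx v
  have hpower : A * ((A⁻¹ * m) ^ (1 / p)) ^ p = m := by
    rw [← rpow_mul (by positivity), one_div_mul_cancel hpq.ne_zero, rpow_one,
      mul_inv_cancel_left₀ hA.ne']
  calc ⟪x, v⟫ - m ≤ (A⁻¹ * m) ^ (1 / p) - A * ((A⁻¹ * m) ^ (1 / p)) ^ p := by
        rw [hpower]
        gcongr
    _ ≤ youngLevel p q A := sub_mul_rpow_le_youngLevel hpq hA (by positivity)

theorem le_integral_exp_neg_momentCost [NeZero n] (hpq : p.HolderConjugate q) (hK : IsCompact K)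
    (hV : 0 < volume.real K) (hBP : volume.real K ≤ volume.real (centroidBody n p K)) :
    Gamma (n / q + 1) * volume.real K *
        youngLevel p q (aOne n p * volume.real K) ^ (-(n / q)) ≤
      ∫ x, exp (-momentCost p K x) := by
  set κ := youngLevel p q (aOne n p * volume.real K)
  have hq := hpq.symm.pos
  have hκ : 0 < κ := youngLevel_pos hpq (mul_pos (aOne_pos hpq.lt) hV)
  have : 0 < Gamma (n / q + 1) := Gamma_pos_of_pos (by positivity)
  have hC := isGaugePower_momentCost hpq hK (ENNReal.toReal_ne_zero.1 hV.ne').1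
  have hvolume : volume.real K ≤ κ ^ (n / q) * volume.real {x | momentCost p K x ≤ 1} :=
    calc volume.real K ≤ volume.real (centroidBody n p K) := hBP
      _ ≤ volume.real {x | momentCost p K x ≤ κ} :=
          measureReal_mono (centroidBody_subset_sublevel_momentCost hpq hV)
            (hC.isCompact_sublevel κ).measure_ne_top
      _ = κ ^ (n / q) * volume.real {x | momentCost p K x ≤ 1} := by
          rw [hC.measureReal_sublevel volume hκ, finrank_euclideanSpace_fin]
  calc Gamma (n / q + 1) * volume.real K * κ ^ (-(n / q))
      ≤ Gamma (n / q + 1) * (κ ^ (n / q) * volume.real {x | momentCost p K x ≤ 1}) *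
          κ ^ (-(n / q)) := by gcongr
    _ = Gamma (n / q + 1) * volume.real {x | momentCost p K x ≤ 1} := by
        rw [rpow_neg hκ.le]
        field_simp
    _ = ∫ x, exp (-momentCost p K x) := by
        rw [hC.integral_exp_neg volume, finrank_euclideanSpace_fin]

theorem gentilConst_momentCost_le [NeZero n] (hpq : p.HolderConjugate q) (hK : IsCompact K)
    (hV : 0 < volume.real K) (hBP : volume.real K ≤ volume.real (centroidBody n p K)) :
    gentilConst n p (momentCost p K) ≤ p / n * ((p - 1) / exp 1) ^ (p - 1) *
      (Gamma (n / q + 1) * volume.real K) ^ (-(p / n)) / (aOne n p * volume.real K) := by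
  set V := volume.real K
  set κ := youngLevel p q (aOne n p * V)
  have hn : (0 : ℝ) < n := by exact_mod_cast Nat.pos_of_neZero n
  have hp := hpq.pos
  have hq := hpq.symm.pos
  have hp1 : 0 < p - 1 := sub_pos.2 hpq.lt
  have ha : 0 < aOne n p := aOne_pos hpq.lt
  have hκ : 0 < κ := youngLevel_pos hpq (mul_pos ha hV)
  have : 0 < Gamma (n / q + 1) := Gamma_pos_of_pos (by positivity)
  have hκpow : (κ ^ (-(n / q))) ^ (p / n) = q ^ (p - 1) * (p * (aOne n p * V)) := by
    rw [← youngLevel_rpow hpq (mul_pos ha hV), ← rpow_mul hκ.le, ← hpq.div_conj_eq_sub_one]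
    congr 1
    field_simp
  have hqpow : q ^ (p - 1) = p ^ (p - 1) / (p - 1) ^ (p - 1) := by
    rw [hpq.conjugate_eq, div_rpow hp.le hp1.le]
  have hppow : p ^ (p + 1) = p ^ (p - 1) * p * p := by
    rw [← rpow_add_one hp.ne', ← rpow_add_one hp.ne']
    ring_nf
  calc gentilConst n p (momentCost p K)
      ≤ p ^ (p + 1) / (n * exp (p - 1) *
          (Gamma (n / q + 1) * V * κ ^ (-(n / q))) ^ (p / n)) := by
        unfold gentilConst
        gcongr
        exact le_integral_exp_neg_momentCost hpq hK hV hBP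
    _ = _ := by
        rw [mul_rpow (by positivity) (by positivity), hκpow, hqpow, hppow,
          div_rpow hp1.le (exp_pos 1).le, ← exp_mul, one_mul, rpow_neg (by positivity)]
        field_simp

theorem integral_legendre_momentCost_le {α : Type*} [MeasurableSpace α] {μ : Measure α}
    [SFinite μ] {a : α → EuclideanSpace ℝ (Fin n)} (hpq : p.HolderConjugate q)
    (hK : IsCompact K) (hK0 : volume K ≠ 0) (ha : MemLp a (.ofReal p) μ) :
    ∫ y, legendre (momentCost p K) (a y) ∂μ ≤ ∫ x in K, absMoment p a μ x := by
  have hG := isGaugePower_absMoment_restrict hpq.lt.le hK hK0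
  have hid := memLp_id_restrict (ν := (volume : Measure (EuclideanSpace ℝ (Fin n)))) (p := p) hK
  calc ∫ y, legendre (momentCost p K) (a y) ∂μ
      ≤ ∫ y, absMoment p id (volume.restrict K) (a y) ∂μ := by
        refine integral_mono_of_nonneg (.of_forall fun y =>
          (isGaugePower_legendre (isGaugePower_momentCost hpq hK hK0) hpq.symm).nonneg _) ?_
          (.of_forall fun y => legendre_legendre_le (hG.bddAbove_inner_sub hpq.lt) _)
        exact (integrable_prod_abs_inner_rpow hpq.pos ha hid).integral_prod_left
    _ = ∫ x in K, absMoment p a μ x := integral_absMoment_comm hpq.pos ha hid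

end CentroidBody

section PolarProjectionBody

variable {n : ℕ} {p q : ℝ} {f : EuclideanSpace ℝ (Fin n) → ℝ}

/-- The unit ball of the norm `ξ ↦ ‖∇_ξ f‖_p`, the polar of the `L_p` projection body of `f`. -/
def polarProjectionBody (p : ℝ) (f : EuclideanSpace ℝ (Fin n) → ℝ) :
    Set (EuclideanSpace ℝ (Fin n)) :=
  {ξ | absMoment p (gradient f) volume ξ ≤ 1}

theorem isGaugePower_absMoment_gradient (hp : 1 ≤ p) (hf : ContDiff ℝ 1 f)
    (hs : HasCompactSupport f) (hf0 : f ≠ 0) :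
    IsGaugePower p (absMoment p (gradient f) volume) := by
  refine isGaugePower_absMoment hp (memLp_gradient hf hs _) fun ξ hξ hzero => hf0 ?_
  exact eq_zero_of_inner_gradient_eq_zero (hf.differentiable one_ne_zero) hs hξ <| congrFun <|
    (Continuous.ae_eq_iff_eq volume ((continuous_gradient hf).inner continuous_const)
      continuous_const).1 hzero

theorem convex_polarProjectionBody (hp : 1 ≤ p) (hf : ContDiff ℝ 1 f)
    (hs : HasCompactSupport f) : Convex ℝ (polarProjectionBody p f) := by
  simpa only [polarProjectionBody, Set.mem_univ, true_and] using
    (convexOn_absMoment hp (memLp_gradient hf hs _)).convex_le 1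

theorem neg_mem_polarProjectionBody {ξ : EuclideanSpace ℝ (Fin n)}
    (hξ : ξ ∈ polarProjectionBody p f) : -ξ ∈ polarProjectionBody p f :=
  (absMoment_neg ξ).trans_le hξ

variable [NeZero n]

theorem affineEnergy_rpow_eq (hp : 1 < p) (hf : ContDiff ℝ 1 f) (hs : HasCompactSupport f)
    (hf0 : f ≠ 0) :
    affineEnergy n p f ^ p = (omegaR n / volume.real (polarProjectionBody p f)) ^ (p / n) *
      (n / (aOne n p * (n + p))) := by
  have hG := isGaugePower_absMoment_gradient hp.le hf hs hf0
  have hnorm (ξ : EuclideanSpace ℝ (Fin n)) : dirDerivLpNorm n p f ξ ^ (-(n : ℝ)) =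
      absMoment p (gradient f) volume ξ ^ (-(n / p)) := by
    rw [dirDerivLpNorm, ← absMoment, ← rpow_mul (absMoment_nonneg ξ), one_div_mul_eq_div, neg_div]
  have hvolume := hG.measureReal_sublevel_one_eq_integral_toSphere volume
  rw [finrank_euclideanSpace_fin] at hvolume
  simp only [affineEnergy, Zp, hnorm, ← hvolume]
  exact cnp_mul_rpow hp (hG.measureReal_sublevel_one_pos volume)

theorem integral_legendre_momentCost_gradient_le (hpq : p.HolderConjugate q)
    (hf : ContDiff ℝ 1 f) (hs : HasCompactSupport f) (hf0 : f ≠ 0) :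
    ∫ y, legendre (momentCost p (polarProjectionBody p f)) (gradient f y) ≤
      n / (n + p) * volume.real (polarProjectionBody p f) := by
  have hG := isGaugePower_absMoment_gradient hpq.lt.le hf hs hf0
  refine (integral_legendre_momentCost_le hpq (hG.isCompact_sublevel 1)
    (hG.measure_sublevel_one_ne_zero volume) (memLp_gradient hf hs _)).trans_eq ?_
  simpa only [finrank_euclideanSpace_fin, polarProjectionBody] using
    hG.setIntegral_sublevel_one volume

theorem integral_comp_gradient_pos {F : EuclideanSpace ℝ (Fin n) → ℝ} (hF : IsGaugePower p F)
    (hf : ContDiff ℝ 1 f) (hs : HasCompactSupport f) (hf0 : f ≠ 0) :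
    0 < ∫ y, F (gradient f y) := by
  obtain ⟨ξ, hξ⟩ := exists_ne (0 : EuclideanSpace ℝ (Fin n))
  obtain ⟨y, hy⟩ : ∃ y, gradient f y ≠ 0 := by
    by_contra! hzero
    exact hf0 (eq_zero_of_inner_gradient_eq_zero (hf.differentiable one_ne_zero) hs hξ
      fun y => by rw [hzero, inner_zero_left])
  have hcont : Continuous fun y => F (gradient f y) :=
    hF.continuous.comp (continuous_gradient hf)
  exact hcont.integral_pos_of_hasCompactSupport_nonneg_nonzero
    ((hasCompactSupport_gradient hs).comp_left hF.map_zero) (fun _ => hF.nonneg _) (hF.pos _ hy).ne'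

theorem gentilConst_pos {C : EuclideanSpace ℝ (Fin n) → ℝ} (hp : 0 < p) (hC : IsGaugePower q C) :
    0 < gentilConst n p C := by
  have hn : (0 : ℝ) < n := by exact_mod_cast Nat.pos_of_neZero n
  have hintegral : 0 < ∫ x, exp (-C x) := by
    rw [hC.integral_exp_neg volume]
    exact mul_pos (Gamma_pos_of_pos (by have := hC.degree_pos; positivity))
      (hC.measureReal_sublevel_one_pos volume)
  unfold gentilConst
  positivity

theorem gentilConst_mul_integral_le (hpq : p.HolderConjugate q) (hf : ContDiff ℝ 1 f)
    (hs : HasCompactSupport f) (hf0 : f ≠ 0)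
    (hBP : volume.real (polarProjectionBody p f) ≤
      volume.real (centroidBody n p (polarProjectionBody p f))) :
    gentilConst n p (momentCost p (polarProjectionBody p f)) *
        ∫ y, legendre (momentCost p (polarProjectionBody p f)) (gradient f y) ≤
      logSobolevConst n p * affineEnergy n p f ^ p := by
  set K := polarProjectionBody p f
  have hG := isGaugePower_absMoment_gradient hpq.lt.le hf hs hf0
  have hV : 0 < volume.real K := hG.measureReal_sublevel_one_pos volume
  have hK : IsCompact K := hG.isCompact_sublevel 1
  have hK0 : volume K ≠ 0 := hG.measure_sublevel_one_ne_zero volume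
  have hn : (0 : ℝ) < n := by exact_mod_cast Nat.pos_of_neZero n
  have hp := hpq.pos
  have hq := hpq.symm.pos
  have hp1 : 0 < p - 1 := sub_pos.2 hpq.lt
  have ha : 0 < aOne n p := aOne_pos hpq.lt
  have hω : 0 < omegaR n := omegaR_pos (by linarith)
  have : 0 < Gamma (n / q + 1) := Gamma_pos_of_pos (by positivity)
  calc gentilConst n p (momentCost p K) * ∫ y, legendre (momentCost p K) (gradient f y)
      ≤ p / n * ((p - 1) / exp 1) ^ (p - 1) *
          (Gamma (n / q + 1) * volume.real K) ^ (-(p / n)) / (aOne n p * volume.real K) *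
          (n / (n + p) * volume.real K) :=
        mul_le_mul (gentilConst_momentCost_le hpq hK hV hBP)
          (integral_legendre_momentCost_gradient_le hpq hf hs hf0)
          (integral_comp_gradient_pos (isGaugePower_legendre
            (isGaugePower_momentCost hpq hK hK0) hpq.symm) hf hs hf0).le (by positivity)
    _ = logSobolevConst n p * affineEnergy n p f ^ p := by
        rw [affineEnergy_rpow_eq hpq.lt hf hs hf0, logSobolevConst_eq hpq,
          mul_rpow (by positivity) hV.le, mul_rpow hω.le (by positivity), rpow_neg hω.le,
          rpow_neg hV.le, div_rpow hω.le hV.le]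
        field_simp

theorem affine_Lp_log_Sobolev_general (hpq : p.HolderConjugate q) (hf : ContDiff ℝ 1 f)
    (hs : HasCompactSupport f) (hf0 : f ≠ 0)
    (hGentil : ∀ C : EuclideanSpace ℝ (Fin n) → ℝ,
      (∀ l : ℝ, 0 ≤ l → ∀ x, C (l • x) = l ^ q * C x) → (∀ x, C (-x) = C x) →
      StrictConvexOn ℝ Set.univ C →
      ∫ x, |f x| ^ p * log (|f x| ^ p) ≤
        n / p * log (gentilConst n p C * ∫ x, legendre C (gradient f x)))
    (hBP : ∀ K : Set (EuclideanSpace ℝ (Fin n)), IsCompact K → Convex ℝ K → 0 ∈ interior K →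
      (∀ x ∈ K, -x ∈ K) → volume.real K ≤ volume.real (centroidBody n p K)) :
    ∫ x, |f x| ^ p * log (|f x| ^ p) ≤
      n / p * log (logSobolevConst n p * affineEnergy n p f ^ p) := by
  have hp := hpq.pos
  have hG := isGaugePower_absMoment_gradient hpq.lt.le hf hs hf0
  have hK : IsCompact (polarProjectionBody p f) := hG.isCompact_sublevel 1
  have hK0 : volume (polarProjectionBody p f) ≠ 0 := hG.measure_sublevel_one_ne_zero volume
  have hC := isGaugePower_momentCost hpq hK hK0
  have hpos := mul_pos (gentilConst_pos hp hC)
    (integral_comp_gradient_pos (isGaugePower_legendre hC hpq.symm) hf hs hf0)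
  calc ∫ x, |f x| ^ p * log (|f x| ^ p)
      ≤ n / p * log (gentilConst n p (momentCost p (polarProjectionBody p f)) *
          ∫ x, legendre (momentCost p (polarProjectionBody p f)) (gradient f x)) :=
        hGentil _ hC.map_smul momentCost_neg (strictConvexOn_momentCost hpq.lt hK hK0)
    _ ≤ n / p * log (logSobolevConst n p * affineEnergy n p f ^ p) := by
        gcongr ?_ * log ?_
        exact gentilConst_mul_integral_le hpq hf hs hf0 (hBP _ hK
          (convex_polarProjectionBody hpq.lt.le hf hs) hG.zero_mem_interior_sublevel
          fun _ => neg_mem_polarProjectionBody)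

end PolarProjectionBody

/-- Sharp affine `L_p` log-Sobolev inequality: assuming Gentil's log-Sobolev inequality for
`q`-homogeneous even strictly convex costs and the `L_p` Busemann-Petty centroid inequality,
every smooth compactly supported `f` with `∫ |f|^p = 1` satisfies
`Ent(|f|^p) ≤ (n/p) log(𝓛_{n,p} 𝓔_p(f)^p)`. -/
theorem affine_Lp_log_Sobolev (n : ℕ) (hn : 1 ≤ n) (p q : ℝ) (hp : 1 < p)
    (hpq : 1 / p + 1 / q = 1) (f : EuclideanSpace ℝ (Fin n) → ℝ) (hf : ContDiff ℝ (⊤ : ℕ∞) f)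
    (hsupp : HasCompactSupport f) (hnorm : (∫ x, |f x| ^ p) = 1)
    (hGentil : ∀ C : EuclideanSpace ℝ (Fin n) → ℝ,
      (∀ l : ℝ, 0 ≤ l → ∀ x, C (l • x) = l ^ q * C x) → (∀ x, C (-x) = C x) →
      StrictConvexOn ℝ Set.univ C →
      ∀ g : EuclideanSpace ℝ (Fin n) → ℝ, ContDiff ℝ (⊤ : ℕ∞) g → HasCompactSupport g →
        (∫ x, |g x| ^ p) = 1 →
        (∫ x, |g x| ^ p * Real.log (|g x| ^ p)) ≤
          ((n : ℝ) / p) * Real.log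
            ((p ^ (p + 1) / ((n : ℝ) * Real.exp (p - 1) *
                (∫ x, Real.exp (-(C x))) ^ (p / (n : ℝ)))) *
              ∫ x, legendre C (gradient g x)))
    (hBP : ∀ K : Set (EuclideanSpace ℝ (Fin n)), IsCompact K → Convex ℝ K →
      (0 : EuclideanSpace ℝ (Fin n)) ∈ interior K →
      (volume K).toReal ≤ (volume (centroidBody n p K)).toReal) :
    (∫ x, |f x| ^ p * Real.log (|f x| ^ p)) ≤
      ((n : ℝ) / p) * Real.log (logSobolevConst n p * affineEnergy n p f ^ p) := by
  have : NeZero n := ⟨Nat.one_le_iff_ne_zero.1 hn⟩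
  exact affine_Lp_log_Sobolev_general (Real.holderConjugate_iff.2 ⟨hp, by simpa using hpq⟩)
    (hf.of_le (by simp)) hsupp (by rintro rfl; simp [(by linarith : p ≠ 0)] at hnorm)
    (fun C hhom heven hconv => hGentil C hhom heven hconv f hf hsupp hnorm)
    fun K hK hconv h0 _ => hBP K hK hconv h0
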